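/- Let S and G be real random variables on a common probability space with S ≥ 0 almost surely and S independent of G, and let U = max(S − G, S). Then for every x ∈ ℝ, P(U > x) = P(S − G > x) + ∫_{(0,∞)} ( P(S > x) − P(S > x + y) ) dP_G(y), where P_G denotes the law of G. -/

import Mathlib

open MeasureTheory ProbabilityTheory

/-!
The event `{x < max (S - G) S}` is the disjoint union of `{x < S - G}` and `{x < S ≤ x + G}`.
Conditioning the second event on the independent variable `G = y` leaves `P(x < S ≤ x + y)`, which
vanishes for `y ≤ 0` and equals `P(S > x) - P(S > x + y)` for `y > 0`.
-/

section Measure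

variable {Ω α β : Type*} [MeasurableSpace Ω] [MeasurableSpace α] [MeasurableSpace β]

theorem measureReal_Ioc_eq_sub [LinearOrder α] [TopologicalSpace α] [OrderClosedTopology α]
    [OpensMeasurableSpace α] (ν : Measure α) {a b : α} (hab : a ≤ b)
    (ha : ν (Set.Ioi a) ≠ ⊤ := by finiteness) :
    ν.real (Set.Ioc a b) = ν.real (Set.Ioi a) - ν.real (Set.Ioi b) := by
  rw [← Set.Ioi_sdiff_Ioi, measureReal_sdiff (Set.Ioi_subset_Ioi hab) measurableSet_Ioi ha]

theorem measurableSet_setOf_fst_mem_Ioc [LinearOrder α] [TopologicalSpace α]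
    [OrderClosedTopology α] [SecondCountableTopology α] [OpensMeasurableSpace α] {a : α} {f : β → α}
    (hf : Measurable f) : MeasurableSet {p : α × β | p.1 ∈ Set.Ioc a (f p.2)} :=
  (measurableSet_lt measurable_const measurable_fst).inter
    (measurableSet_le measurable_fst (hf.comp measurable_snd))

theorem measureReal_prod_apply_symm (μ : Measure α) (ν : Measure β) [IsFiniteMeasure μ]
    [SFinite ν] {T : Set (α × β)} (hT : MeasurableSet T) :
    (μ.prod ν).real T = ∫ y, μ.real ((fun x ↦ (x, y)) ⁻¹' T) ∂ν := by
  rw [measureReal_def, Measure.prod_apply_symm hT]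
  exact (integral_toReal (measurable_measure_prodMk_right hT).aemeasurable
    (.of_forall fun y ↦ measure_lt_top _ _)).symm

theorem measureReal_prodMk_preimage_of_indepFun {μ : Measure Ω} [IsFiniteMeasure μ]
    {X : Ω → α} {Y : Ω → β} (hX : AEMeasurable X μ) (hY : AEMeasurable Y μ)
    (hXY : IndepFun X Y μ) {T : Set (α × β)} (hT : MeasurableSet T) :
    μ.real ((fun ω ↦ (X ω, Y ω)) ⁻¹' T) =
      ∫ y, (μ.map X).real ((fun x ↦ (x, y)) ⁻¹' T) ∂(μ.map Y) := by
  rw [← map_measureReal_apply_of_aemeasurable (hX.prodMk hY) hT, hXY.map_prod_eq_prod_map_map hX hY,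
    measureReal_prod_apply_symm _ _ hT]

end Measure

section OrderedAddGroup

variable {Ω E : Type*} [AddCommGroup E] [LinearOrder E] [IsOrderedAddMonoid E]

theorem setOf_lt_max_sub_eq_union (S G : Ω → E) (x : E) :
    {ω | x < max (S ω - G ω) (S ω)} =
      {ω | x < S ω - G ω} ∪ {ω | S ω ∈ Set.Ioc x (x + G ω)} := by
  ext ω
  simp only [Set.mem_ofPred_eq, Set.mem_union, Set.mem_Ioc, lt_max_iff, ← sub_le_iff_le_add,
    ← not_lt (b := S ω - G ω)]
  tauto

theorem disjoint_setOf_lt_sub_setOf_mem_Ioc (S G : Ω → E) (x : E) :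
    Disjoint {ω | x < S ω - G ω} {ω | S ω ∈ Set.Ioc x (x + G ω)} :=
  Set.disjoint_left.2 fun _ hlt hmem ↦ (sub_le_iff_le_add.2 hmem.2).not_gt hlt

variable [TopologicalSpace E] [OrderClosedTopology E] [SecondCountableTopology E]
  [MeasurableSpace E] [OpensMeasurableSpace E] [MeasurableAdd E]
variable [MeasurableSpace Ω] {μ : Measure Ω} [IsFiniteMeasure μ] {S G : Ω → E}

theorem measureReal_setOf_mem_Ioc_add_of_indepFun (hS : AEMeasurable S μ)
    (hG : AEMeasurable G μ) (hind : IndepFun S G μ) (x : E) :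
    μ.real {ω | S ω ∈ Set.Ioc x (x + G ω)} =
      ∫ y in Set.Ioi 0, (μ.real {ω | x < S ω} - μ.real {ω | x + y < S ω}) ∂(μ.map G) := by
  have tail_eq (a : E) : (μ.map S).real (Set.Ioi a) = μ.real {ω | a < S ω} :=
    map_measureReal_apply_of_aemeasurable hS measurableSet_Ioi
  have integral_eq : μ.real {ω | S ω ∈ Set.Ioc x (x + G ω)} =
      ∫ y, (μ.map S).real (Set.Ioc x (x + y)) ∂(μ.map G) :=
    measureReal_prodMk_preimage_of_indepFun hS hG hind
      (measurableSet_setOf_fst_mem_Ioc (measurable_const_add x))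
  have eq_zero_of_notMem (y : E) (hy : y ∉ Set.Ioi 0) :
      (μ.map S).real (Set.Ioc x (x + y)) = 0 := by
    rw [Set.Ioc_eq_empty (by simpa using hy), measureReal_empty]
  rw [integral_eq, ← setIntegral_eq_integral_of_forall_compl_eq_zero eq_zero_of_notMem]
  refine setIntegral_congr_fun measurableSet_Ioi fun y (hy : 0 < y) ↦ ?_
  rw [measureReal_Ioc_eq_sub _ (le_add_of_nonneg_right hy.le), tail_eq, tail_eq]

theorem tail_identity_max_general (hS : AEMeasurable S μ) (hG : AEMeasurable G μ)
    (hind : IndepFun S G μ) (x : E) :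
    μ.real {ω | x < max (S ω - G ω) (S ω)} =
      μ.real {ω | x < S ω - G ω} +
        ∫ y in Set.Ioi 0, (μ.real {ω | x < S ω} - μ.real {ω | x + y < S ω}) ∂(μ.map G) := by
  have nullMeasurableSet_mem_Ioc : NullMeasurableSet {ω | S ω ∈ Set.Ioc x (x + G ω)} μ :=
    (hS.prodMk hG).nullMeasurableSet_preimage
      (measurableSet_setOf_fst_mem_Ioc (measurable_const_add x))
  rw [setOf_lt_max_sub_eq_union, measureReal_union₀ nullMeasurableSet_mem_Ioc
    (disjoint_setOf_lt_sub_setOf_mem_Ioc S G x).aedisjoint,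
    measureReal_setOf_mem_Ioc_add_of_indepFun hS hG hind]

end OrderedAddGroup

/-- Tail identity for `U = max(S - G, S)` with `S ≥ 0` independent of `G`:
`P(U > x) = P(S - G > x) + ∫_{(0,∞)} (P(S > x) - P(S > x + y)) dP_G(y)`. -/
theorem tail_identity_max
    {Ω : Type*} [MeasureSpace Ω] [IsProbabilityMeasure (ℙ : Measure Ω)]
    (S G : Ω → ℝ) (hS : Measurable S) (hG : Measurable G)
    (hS0 : ∀ᵐ ω, 0 ≤ S ω) (hind : IndepFun S G)
    (U : Ω → ℝ) (hU : ∀ ω, U ω = max (S ω - G ω) (S ω)) :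
    ∀ x : ℝ,
      (ℙ {ω | x < U ω}).toReal =
        (ℙ {ω | x < S ω - G ω}).toReal +
        ∫ y in Set.Ioi (0 : ℝ),
          ((ℙ {ω | x < S ω}).toReal - (ℙ {ω | x + y < S ω}).toReal)
          ∂(Measure.map G ℙ) := by
  simp only [hU]
  exact tail_identity_max_general hS.aemeasurable hG.aemeasurable hind
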